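/- Let R be a 3-torsion free prime alternative ring containing a nontrivial idempotent e₁. Then every Lie triple derivable map D : R → R is almost additive: for all a, b ∈ R there exists z ∈ Z(R) (depending on a and b) such that D(a + b) = D(a) + D(b) + z. -/

import Mathlib

/-- The Lie bracket (commutator) in a not-necessarily-associative ring. -/
def lieBr {R : Type*} [NonUnitalNonAssocRing R] (x y : R) : R := x * y - y * x

/-- `R` is an alternative ring: `(x*x)*y = x*(x*y)` and `(y*x)*x = y*(x*x)`. -/
def IsAlternative (R : Type*) [NonUnitalNonAssocRing R] : Prop :=
  (∀ x y : R, x * x * y = x * (x * y)) ∧ (∀ x y : R, y * x * x = y * (x * x))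

/-- The centre of a not-necessarily-associative ring: elements `r` whose associators
`(r,x,y)`, `(x,r,y)`, `(x,y,r)` all vanish and which commute with everything. -/
def ringCenter (R : Type*) [NonUnitalNonAssocRing R] : Set R :=
  {r | (∀ x y : R, r * x * y = r * (x * y)) ∧ (∀ x y : R, x * r * y = x * (r * y)) ∧
       (∀ x y : R, x * y * r = x * (y * r)) ∧ (∀ x : R, r * x = x * r)}

/-- `e` is a nontrivial idempotent: idempotent, nonzero and not a multiplicative identity. -/
def IsNontrivialIdempotent {R : Type*} [NonUnitalNonAssocRing R] (e : R) : Prop :=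
  e * e = e ∧ e ≠ 0 ∧ ¬ (∀ x : R, e * x = x ∧ x * e = x)

/-- Peirce component `R₁₁` relative to the idempotent `e`. -/
def peirce11 {R : Type*} [NonUnitalNonAssocRing R] (e : R) : Set R :=
  {x | e * x = x ∧ x * e = x}

/-- Peirce component `R₁₂` relative to the idempotent `e`. -/
def peirce12 {R : Type*} [NonUnitalNonAssocRing R] (e : R) : Set R :=
  {x | e * x = x ∧ x * e = 0}

/-- Peirce component `R₂₁` relative to the idempotent `e`. -/
def peirce21 {R : Type*} [NonUnitalNonAssocRing R] (e : R) : Set R :=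
  {x | e * x = 0 ∧ x * e = x}

/-- Peirce component `R₂₂` relative to the idempotent `e`. -/
def peirce22 {R : Type*} [NonUnitalNonAssocRing R] (e : R) : Set R :=
  {x | e * x = 0 ∧ x * e = 0}

/-- Condition (i): if `a₁₁ + a₂₂` commutes with every element of `R₁₂`, it is central. -/
def CondI {R : Type*} [NonUnitalNonAssocRing R] (e : R) : Prop :=
  ∀ a b : R, a ∈ peirce11 e → b ∈ peirce22 e →
    (∀ m ∈ peirce12 e, lieBr (a + b) m = 0) → a + b ∈ ringCenter R

/-- Condition (ii): if `a₁₁ + a₂₂` commutes with every element of `R₂₁`, it is central. -/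
def CondII {R : Type*} [NonUnitalNonAssocRing R] (e : R) : Prop :=
  ∀ a b : R, a ∈ peirce11 e → b ∈ peirce22 e →
    (∀ m ∈ peirce21 e, lieBr (a + b) m = 0) → a + b ∈ ringCenter R

/-- A map `φ` is Lie multiplicative if `φ [x,y] = [φ x, φ y]`. -/
def IsLieMultiplicative {R R' : Type*} [NonUnitalNonAssocRing R] [NonUnitalNonAssocRing R']
    (φ : R → R') : Prop :=
  ∀ x y : R, φ (lieBr x y) = lieBr (φ x) (φ y)

/-- A map `D` is Lie triple derivable if
`D [[x,y],z] = [[D x,y],z] + [[x,D y],z] + [[x,y],D z]`. -/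
def IsLieTripleDerivable {R : Type*} [NonUnitalNonAssocRing R] (D : R → R) : Prop :=
  ∀ x y z : R, D (lieBr (lieBr x y) z) =
    lieBr (lieBr (D x) y) z + lieBr (lieBr x (D y)) z + lieBr (lieBr x y) (D z)

/-- A map `D` is Lie derivable if `D [x,y] = [D x, y] + [x, D y]`. -/
def IsLieDerivable {R : Type*} [NonUnitalNonAssocRing R] (D : R → R) : Prop :=
  ∀ x y : R, D (lieBr x y) = lieBr (D x) y + lieBr x (D y)

/-- `I` is a two-sided ideal (as a set) of the not-necessarily-associative ring `R`. -/
def IsTwoSidedIdealSet {R : Type*} [NonUnitalNonAssocRing R] (I : Set R) : Prop :=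
  (0 : R) ∈ I ∧ (∀ a b : R, a ∈ I → b ∈ I → a + b ∈ I) ∧ (∀ a : R, a ∈ I → -a ∈ I) ∧
  (∀ r a : R, a ∈ I → r * a ∈ I ∧ a * r ∈ I)

/-- `R` is prime: for any two nonzero two-sided ideals `A`, `B`, some product `a*b` with
`a ∈ A`, `b ∈ B` is nonzero (i.e. `A·B ≠ 0`). -/
def IsPrimeRing (R : Type*) [NonUnitalNonAssocRing R] : Prop :=
  ∀ A B : Set R, IsTwoSidedIdealSet A → IsTwoSidedIdealSet B → A ≠ {0} → B ≠ {0} →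
    ∃ a ∈ A, ∃ b ∈ B, a * b ≠ 0

/-- `R` is 3-torsion free: `3x = 0` implies `x = 0`. -/
def ThreeTorsionFree (R : Type*) [NonUnitalNonAssocRing R] : Prop :=
  ∀ x : R, x + x + x = 0 → x = 0

/-!
Let `Δ(a, b) = D (a + b) - D a - D b`. Since `[[·, ·], ·]` is triadditive, triple derivability
makes `Δ` equivariant: `[[Δ(a, b), y], z] = Δ([[a, y], z], [[b, y], z])`, and likewise in the
third slot. Now `x ↦ [[x, e], e]` is the projection of `R` onto the off-diagonal Peirce part
`R₁₂ + R₂₁` along `R₁₁ + R₂₂`, so equivariance locates `Δ`: it is diagonal as soon as one argument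
is. Expanding `D [[e + a, e - b], e]` then shows that `D` is additive on the off-diagonal part,
whence every `Δ(a, b)` is diagonal and commutes with the off-diagonal part.

In a prime ring such an element `t` is central. The diagonal elements annihilating the
off-diagonal part form an ideal, which is zero; it contains all `[t, d]` and `(t, d, d')` with
`d, d'` diagonal, while the associators `(t, m, x)` with `m` off-diagonal vanish or reduce to
commutators `[m * x, t]` by the Peirce relations.
-/

section LieBracket

variable {R : Type*} [NonUnitalNonAssocRing R]

theorem lieBr_zero (x : R) : lieBr x 0 = 0 := by simp [lieBr]

theorem zero_lieBr (x : R) : lieBr 0 x = 0 := by simp [lieBr]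

theorem lieBr_add (x y z : R) : lieBr x (y + z) = lieBr x y + lieBr x z := by
  simp only [lieBr, mul_add, add_mul]; abel

theorem add_lieBr (x y z : R) : lieBr (x + y) z = lieBr x z + lieBr y z := by
  simp only [lieBr, mul_add, add_mul]; abel

theorem lieBr_neg (x y : R) : lieBr x (-y) = -lieBr x y := by
  simp only [lieBr, mul_neg, neg_mul]; abel

theorem neg_lieBr (x y : R) : lieBr (-x) y = -lieBr x y := by
  simp only [lieBr, mul_neg, neg_mul]; abel

theorem lieBr_sub (x y z : R) : lieBr x (y - z) = lieBr x y - lieBr x z := by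
  rw [sub_eq_add_neg, lieBr_add, lieBr_neg, ← sub_eq_add_neg]

theorem sub_lieBr (x y z : R) : lieBr (x - y) z = lieBr x z - lieBr y z := by
  rw [sub_eq_add_neg, add_lieBr, neg_lieBr, ← sub_eq_add_neg]

theorem neg_lieBr_swap (x y : R) : -lieBr x y = lieBr y x := neg_sub _ _

theorem lieBr_self (x : R) : lieBr x x = 0 := sub_self _

end LieBracket

section Associator

variable {R : Type*} [NonUnitalNonAssocRing R]

theorem associator_add_left (x x' y z : R) :
    associator (x + x') y z = associator x y z + associator x' y z :=
  congr($(map_add AddMonoidHom.associator x x') y z)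

theorem associator_add_middle (x y y' z : R) :
    associator x (y + y') z = associator x y z + associator x y' z :=
  congr($(map_add (AddMonoidHom.associator x) y y') z)

theorem associator_add_right (x y z z' : R) :
    associator x y (z + z') = associator x y z + associator x y z' :=
  map_add (AddMonoidHom.associator x y) z z'

namespace IsAlternative

variable (hR : IsAlternative R)
include hR

theorem associator_swap_left (x y z : R) : associator y x z = -associator x y z := by
  have hxy := hR.1 (x + y) z
  simp only [add_mul, mul_add, hR.1 x z, hR.1 y z] at hxy
  rw [associator, associator]
  grind

theorem associator_swap_right (x y z : R) : associator x z y = -associator x y z := by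
  have hyz := hR.2 (y + z) x
  simp only [add_mul, mul_add, hR.2 y x, hR.2 z x] at hyz
  rw [associator, associator]
  grind

theorem associator_rotate (x y z : R) : associator y z x = associator x y z := by
  rw [hR.associator_swap_right, hR.associator_swap_left, neg_neg]

theorem flexible (x y : R) : x * y * x = x * (y * x) := by
  rw [← sub_eq_zero, ← associator_apply, hR.associator_swap_left, associator_apply, hR.2, sub_self,
    neg_zero]

end IsAlternative

end Associator

section Peirce

variable {R : Type*} [NonUnitalNonAssocRing R]

/-- The Peirce component of `R` on which left multiplication by `e` is multiplication by `i` and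
right multiplication by `e` is multiplication by `j`. The classical `R₁₁`, `R₁₂`, `R₂₁`, `R₂₂` have
weights `(1, 1)`, `(1, 0)`, `(0, 1)`, `(0, 0)`; integer weights make the multiplication table
uniform. -/
def peirceComponent (e : R) (i j : ℤ) : AddSubgroup R where
  carrier := {x | e * x = i • x ∧ x * e = j • x}
  zero_mem' := by simp
  add_mem' := by
    rintro x y ⟨hx, hx'⟩ ⟨hy, hy'⟩
    simp only [Set.mem_ofPred_eq, mul_add, add_mul, smul_add, hx, hx', hy, hy', and_self]
  neg_mem' := by
    rintro x ⟨hx, hx'⟩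
    simp only [Set.mem_ofPred_eq, mul_neg, neg_mul, smul_neg, hx, hx', and_self]

/-- The diagonal Peirce part `R₁₁ + R₂₂`, encoded as the commutant of `e`. -/
def peirceDiag (e : R) : AddSubgroup R where
  carrier := {x | e * x = x * e}
  zero_mem' := by simp
  add_mem' := by
    rintro x y (hx : e * x = x * e) (hy : e * y = y * e)
    simp only [Set.mem_ofPred_eq, mul_add, add_mul, hx, hy]
  neg_mem' := by
    rintro x (hx : e * x = x * e)
    simp only [Set.mem_ofPred_eq, mul_neg, neg_mul, hx]

/-- The off-diagonal Peirce part `R₁₂ + R₂₁`, encoded as the set of `x` with `e * x + x * e = x`. -/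
def peirceOff (e : R) : AddSubgroup R where
  carrier := {x | e * x + x * e = x}
  zero_mem' := by simp
  add_mem' := by
    rintro x y (hx : e * x + x * e = x) (hy : e * y + y * e = y)
    rw [Set.mem_ofPred_eq, mul_add, add_mul, add_add_add_comm, hx, hy]
  neg_mem' := by
    rintro x (hx : e * x + x * e = x)
    rw [Set.mem_ofPred_eq, mul_neg, neg_mul, ← neg_add, hx]

/-- `p` and `q` are the two distinct Peirce weights `0` and `1`, in either order. Statements about
such a pair treat `R₁₂` and `R₂₁` simultaneously. -/
def IsWeightPair (p q : ℤ) : Prop := p = 1 ∧ q = 0 ∨ p = 0 ∧ q = 1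

theorem isWeightPair_one_zero : IsWeightPair 1 0 := .inl ⟨rfl, rfl⟩

theorem isWeightPair_zero_one : IsWeightPair 0 1 := .inr ⟨rfl, rfl⟩

theorem IsWeightPair.symm {p q : ℤ} (h : IsWeightPair p q) : IsWeightPair q p :=
  Or.symm (h.imp And.symm And.symm)

theorem IsWeightPair.add_eq_one {p q : ℤ} (h : IsWeightPair p q) : p + q = 1 := by
  rcases h with ⟨rfl, rfl⟩ | ⟨rfl, rfl⟩ <;> rfl

variable {e : R} {i j k l p q : ℤ} {x y : R}

theorem peirceComponent_le_peirceDiag (e : R) (i : ℤ) :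
    peirceComponent e i i ≤ peirceDiag e :=
  fun _ hx => hx.1.trans hx.2.symm

theorem peirceComponent_le_peirceOff (e : R) (h : i + j = 1) :
    peirceComponent e i j ≤ peirceOff e := by
  rintro x ⟨hx, hx'⟩
  change e * x + x * e = x
  rw [hx, hx', ← add_smul, h, one_smul]

namespace IsAlternative

theorem mul_mem_peirceComponent (hR : IsAlternative R) (hx : x ∈ peirceComponent e i j)
    (hy : y ∈ peirceComponent e k l) :
    x * y ∈ peirceComponent e (i + j - k) (k + l - j) := by
  have hl := hR.associator_swap_left x e y
  have hr := hR.associator_swap_right x y e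
  simp only [associator, hx.1, hx.2, hy.1, hy.2, smul_mul_assoc, mul_smul_comm] at hl hr
  constructor
  · linear_combination (norm := module) -hl
  · linear_combination (norm := module) hr

theorem smul_mul_eq_smul_mul (hR : IsAlternative R) (hx : x ∈ peirceComponent e i j)
    (hy : y ∈ peirceComponent e k l) : (j - k) • (x * y) = (i - l) • (y * x) := by
  have h := hR.associator_swap_left x e y
  rw [hR.associator_rotate y e x] at h
  simp only [associator, hx.1, hx.2, hy.1, hy.2, smul_mul_assoc, mul_smul_comm] at h
  linear_combination (norm := module) h

theorem mul_eq_zero_of_diag_left (hR : IsAlternative R) (h : IsWeightPair p q)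
    (hx : x ∈ peirceComponent e p p) (hy : y ∈ peirceComponent e q p) : x * y = 0 := by
  have hxy := hR.smul_mul_eq_smul_mul hx hy
  rcases h with ⟨rfl, rfl⟩ | ⟨rfl, rfl⟩ <;> simpa using hxy

theorem mul_eq_zero_of_diag_right (hR : IsAlternative R) (h : IsWeightPair p q)
    (hx : x ∈ peirceComponent e p q) (hy : y ∈ peirceComponent e p p) : x * y = 0 := by
  have hxy := hR.smul_mul_eq_smul_mul hx hy
  rcases h with ⟨rfl, rfl⟩ | ⟨rfl, rfl⟩ <;> simpa using hxy

theorem mul_eq_zero_of_diag_diag (hR : IsAlternative R) (he : IsIdempotentElem e)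
    (h : IsWeightPair p q) (hx : x ∈ peirceComponent e p p) (hy : y ∈ peirceComponent e q q) :
    x * y = 0 := by
  have hcomm : x * y = y * x := by
    have hxy := hR.smul_mul_eq_smul_mul hx hy
    rcases h with ⟨rfl, rfl⟩ | ⟨rfl, rfl⟩ <;> simpa using hxy
  have hleft := (hR.mul_mem_peirceComponent hx hy).1
  have hleft' := (hR.mul_mem_peirceComponent hy hx).1
  rw [← hcomm] at hleft'
  have hidem := hR.1 e (x * y)
  rw [he.eq] at hidem
  -- The weights of the two products are `2` and `-1`, and neither is compatible with `e * e = e`.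
  have eq_zero {z : R} (hidem : e * z = e * (e * z)) (htwo : e * z = (2 : ℤ) • z)
      (hneg : e * z = -z) : z = 0 := by
    have hself : -z = z := by rwa [hneg, mul_neg, hneg, neg_neg] at hidem
    rw [hneg, hself, two_smul] at htwo
    exact left_eq_add.1 htwo
  rcases h with ⟨rfl, rfl⟩ | ⟨rfl, rfl⟩
  · exact eq_zero hidem (by simpa using hleft) (by simpa using hleft')
  · exact eq_zero hidem (by simpa using hleft') (by simpa using hleft)

section Decomposition

theorem exists_add_eq_of_mem_peirceDiag (hR : IsAlternative R) (he : IsIdempotentElem e)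
    (h : IsWeightPair p q) (hx : x ∈ peirceDiag e) :
    ∃ a ∈ peirceComponent e p p, ∃ b ∈ peirceComponent e q q, a + b = x := by
  have hcomm : x * e = e * x := Eq.symm hx
  have hleft : e * (e * x) = e * x := by rw [← hR.1, he.eq]
  have hright : e * x * e = e * x := by rw [hR.flexible, hcomm, hleft]
  have h₁ : e * x ∈ peirceComponent e 1 1 := by
    constructor <;> simp only [hleft, hright, one_smul]
  have h₀ : x - e * x ∈ peirceComponent e 0 0 := by
    constructor <;> simp only [mul_sub, sub_mul, hleft, hright, hcomm, sub_self, zero_smul]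
  rcases h with ⟨rfl, rfl⟩ | ⟨rfl, rfl⟩
  · exact ⟨_, h₁, _, h₀, add_sub_cancel _ _⟩
  · exact ⟨_, h₀, _, h₁, sub_add_cancel _ _⟩

theorem exists_add_eq_of_mem_peirceOff (hR : IsAlternative R) (he : IsIdempotentElem e)
    (hx : x ∈ peirceOff e) :
    ∃ a ∈ peirceComponent e 1 0, ∃ b ∈ peirceComponent e 0 1, a + b = x := by
  have hsum : e * x + x * e = x := hx
  have hleft : e * (e * x) = e * x := by rw [← hR.1, he.eq]
  have hright : x * e * e = x * e := by rw [hR.2, he.eq]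
  have hmid : e * (x * e) = 0 := by
    have := congr(e * $hsum)
    rwa [mul_add, hleft, add_eq_left] at this
  have hmid' : e * x * e = 0 := by rw [hR.flexible, hmid]
  refine ⟨e * x, ⟨?_, ?_⟩, x * e, ⟨?_, ?_⟩, hsum⟩ <;>
    simp only [hleft, hright, hmid, hmid', one_smul, zero_smul]

@[elab_as_elim]
theorem peirceOff_induction (hR : IsAlternative R) (he : IsIdempotentElem e) {motive : R → Prop}
    (add : ∀ x y, motive x → motive y → motive (x + y))
    (component : ∀ p q, IsWeightPair p q → ∀ x ∈ peirceComponent e p q, motive x)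
    (hx : x ∈ peirceOff e) : motive x := by
  obtain ⟨a, ha, b, hb, rfl⟩ := hR.exists_add_eq_of_mem_peirceOff he hx
  exact add a b (component 1 0 isWeightPair_one_zero a ha)
    (component 0 1 isWeightPair_zero_one b hb)

theorem lieBr_lieBr_mem_peirceOff (hR : IsAlternative R) (he : IsIdempotentElem e) (x : R) :
    lieBr (lieBr x e) e ∈ peirceOff e := by
  have hleft (y : R) : e * (e * y) = e * y := by rw [← hR.1, he.eq]
  have hright (y : R) : y * e * e = y * e := by rw [hR.2, he.eq]
  change e * _ + _ * e = _
  simp only [lieBr, mul_sub, sub_mul, hR.flexible, hleft, hright]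
  abel

theorem sub_lieBr_lieBr_mem_peirceDiag (hR : IsAlternative R) (he : IsIdempotentElem e) (x : R) :
    x - lieBr (lieBr x e) e ∈ peirceDiag e := by
  have hleft (y : R) : e * (e * y) = e * y := by rw [← hR.1, he.eq]
  have hright (y : R) : y * e * e = y * e := by rw [hR.2, he.eq]
  change e * _ = _ * e
  simp only [lieBr, mul_sub, sub_mul, hR.flexible, hleft, hright]
  abel

theorem exists_diag_add_off_eq (hR : IsAlternative R) (he : IsIdempotentElem e) (x : R) :
    ∃ d ∈ peirceDiag e, ∃ m ∈ peirceOff e, d + m = x :=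
  ⟨_, hR.sub_lieBr_lieBr_mem_peirceDiag he x, _, hR.lieBr_lieBr_mem_peirceOff he x,
    sub_add_cancel _ _⟩

theorem mem_peirceDiag_of_lieBr_lieBr_eq_zero (hR : IsAlternative R) (he : IsIdempotentElem e)
    (hx : lieBr (lieBr x e) e = 0) : x ∈ peirceDiag e := by
  simpa only [hx, sub_zero] using hR.sub_lieBr_lieBr_mem_peirceDiag he x

theorem lieBr_lieBr_of_mem_peirceOff (hR : IsAlternative R) (he : IsIdempotentElem e)
    (hx : x ∈ peirceOff e) : lieBr (lieBr x e) e = x := by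
  obtain ⟨a, ⟨ha, ha'⟩, b, ⟨hb, hb'⟩, rfl⟩ := hR.exists_add_eq_of_mem_peirceOff he hx
  simp [lieBr, mul_add, add_mul, mul_sub, sub_mul, ha, ha', hb, hb', add_comm]

end Decomposition

end IsAlternative

theorem lieBr_eq_zero_of_mem_peirceDiag (hx : x ∈ peirceDiag e) : lieBr x e = 0 :=
  sub_eq_zero.2 (Eq.symm hx)

theorem lieBr_mem_peirceComponent (hx : x ∈ peirceComponent e i j) :
    lieBr x e ∈ peirceComponent e i j := by
  rw [lieBr, hx.1, hx.2]
  exact sub_mem (zsmul_mem hx j) (zsmul_mem hx i)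

namespace IsAlternative

theorem eq_zero_of_mem_peirceDiag_of_mem_peirceOff (hR : IsAlternative R)
    (he : IsIdempotentElem e) (hd : x ∈ peirceDiag e) (hm : x ∈ peirceOff e) : x = 0 := by
  rw [← hR.lieBr_lieBr_of_mem_peirceOff he hm, lieBr_eq_zero_of_mem_peirceDiag hd, zero_lieBr]

variable {c d m n : R}

theorem mul_mem_peirceDiag (hR : IsAlternative R) (he : IsIdempotentElem e)
    (hc : c ∈ peirceDiag e) (hd : d ∈ peirceDiag e) : c * d ∈ peirceDiag e := by
  have h := isWeightPair_one_zero
  obtain ⟨a, ha, b, hb, rfl⟩ := hR.exists_add_eq_of_mem_peirceDiag he h hc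
  obtain ⟨a', ha', b', hb', rfl⟩ := hR.exists_add_eq_of_mem_peirceDiag he h hd
  rw [mul_add, add_mul, add_mul, hR.mul_eq_zero_of_diag_diag he h ha hb',
    hR.mul_eq_zero_of_diag_diag he h.symm hb ha', add_zero, zero_add]
  exact add_mem (peirceComponent_le_peirceDiag e 1 (hR.mul_mem_peirceComponent ha ha'))
    (peirceComponent_le_peirceDiag e 0 (hR.mul_mem_peirceComponent hb hb'))

theorem diag_mul_mem_peirceOff (hR : IsAlternative R) (he : IsIdempotentElem e)
    (hd : d ∈ peirceDiag e) (hm : m ∈ peirceOff e) : d * m ∈ peirceOff e := by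
  refine hR.peirceOff_induction he (fun m n hm hn => ?_) (fun p q h m hm => ?_) hm
  · simpa only [mul_add] using add_mem hm hn
  · obtain ⟨a, ha, b, hb, rfl⟩ := hR.exists_add_eq_of_mem_peirceDiag he h hd
    rw [add_mul, hR.mul_eq_zero_of_diag_left h.symm hb hm, add_zero]
    exact peirceComponent_le_peirceOff e (by linarith [h.add_eq_one])
      (hR.mul_mem_peirceComponent ha hm)

theorem mul_diag_mem_peirceOff (hR : IsAlternative R) (he : IsIdempotentElem e)
    (hd : d ∈ peirceDiag e) (hm : m ∈ peirceOff e) : m * d ∈ peirceOff e := by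
  refine hR.peirceOff_induction he (fun m n hm hn => ?_) (fun p q h m hm => ?_) hm
  · simpa only [add_mul] using add_mem hm hn
  · obtain ⟨a, ha, b, hb, rfl⟩ := hR.exists_add_eq_of_mem_peirceDiag he h hd
    rw [mul_add, hR.mul_eq_zero_of_diag_right h hm ha, zero_add]
    exact peirceComponent_le_peirceOff e (by linarith [h.add_eq_one])
      (hR.mul_mem_peirceComponent hm hb)

theorem lieBr_off_diag_mem_peirceOff (hR : IsAlternative R) (he : IsIdempotentElem e)
    (hm : m ∈ peirceOff e) (hd : d ∈ peirceDiag e) : lieBr m d ∈ peirceOff e :=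
  sub_mem (hR.mul_diag_mem_peirceOff he hd hm) (hR.diag_mul_mem_peirceOff he hd hm)

theorem mul_mem_peirceComponent_swap (hR : IsAlternative R) (hm : m ∈ peirceComponent e p q)
    (hn : n ∈ peirceComponent e p q) : m * n ∈ peirceComponent e q p := by
  simpa using hR.mul_mem_peirceComponent hm hn

theorem mul_mem_peirceComponent_diag (hR : IsAlternative R) (hm : m ∈ peirceComponent e p q)
    (hn : n ∈ peirceComponent e q p) : m * n ∈ peirceComponent e p p := by
  simpa using hR.mul_mem_peirceComponent hm hn

theorem lieBr_mem_peirceDiag (hR : IsAlternative R) (hm : m ∈ peirceComponent e p q)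
    (hn : n ∈ peirceComponent e q p) : lieBr m n ∈ peirceDiag e :=
  sub_mem (peirceComponent_le_peirceDiag e p (hR.mul_mem_peirceComponent_diag hm hn))
    (peirceComponent_le_peirceDiag e q (hR.mul_mem_peirceComponent_diag hn hm))

theorem lieBr_mem_peirceComponent_swap (hR : IsAlternative R) (hm : m ∈ peirceComponent e p q)
    (hn : n ∈ peirceComponent e p q) : lieBr m n ∈ peirceComponent e q p :=
  sub_mem (hR.mul_mem_peirceComponent_swap hm hn) (hR.mul_mem_peirceComponent_swap hn hm)

section PeirceAssociators

theorem associator_diag_diag_off (hR : IsAlternative R) (he : IsIdempotentElem e)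
    (hc : c ∈ peirceDiag e) (hd : d ∈ peirceDiag e) (hm : m ∈ peirceOff e) :
    associator c d m = 0 := by
  refine hR.peirceOff_induction he (fun m n hm hn => ?_) (fun p q h m hm => ?_) hm
  · rw [associator_add_right, hm, hn, add_zero]
  · obtain ⟨a, ha, b, hb, rfl⟩ := hR.exists_add_eq_of_mem_peirceDiag he h hc
    obtain ⟨a', ha', b', hb', rfl⟩ := hR.exists_add_eq_of_mem_peirceDiag he h hd
    have left_zero {b m : R} := hR.mul_eq_zero_of_diag_left (x := b) (y := m) (e := e) h.symm
    have right_zero {m a : R} := hR.mul_eq_zero_of_diag_right (x := m) (y := a) (e := e) h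
    have hbb' : b * b' ∈ peirceComponent e q q := by
      simpa using hR.mul_mem_peirceComponent hb hb'
    have ha'm : a' * m ∈ peirceComponent e p q := by
      simpa using hR.mul_mem_peirceComponent ha' hm
    have haa' : associator a a' m = 0 := by
      rw [← hR.associator_rotate, associator, right_zero hm ha, right_zero ha'm ha, mul_zero,
        sub_zero]
    have hab' : associator a b' m = 0 := by
      rw [associator, hR.mul_eq_zero_of_diag_diag he h ha hb', left_zero hb' hm, zero_mul, mul_zero,
        sub_zero]
    have hba' : associator b a' m = 0 := by
      rw [associator, hR.mul_eq_zero_of_diag_diag he h.symm hb ha', left_zero hb ha'm, zero_mul,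
        sub_zero]
    have hbb'' : associator b b' m = 0 := by
      rw [associator, left_zero hbb' hm, left_zero hb' hm, mul_zero, sub_zero]
    simp only [associator_add_left, associator_add_middle, haa', hab', hba', hbb'', add_zero]

theorem associator_diag_off_opposite (hR : IsAlternative R) (he : IsIdempotentElem e)
    (h : IsWeightPair p q) (hd : d ∈ peirceDiag e) (hm : m ∈ peirceComponent e p q)
    (hn : n ∈ peirceComponent e q p) : associator d m n = 0 := by
  obtain ⟨a, ha, b, hb, rfl⟩ := hR.exists_add_eq_of_mem_peirceDiag he h hd
  have ha_mn : associator a m n = 0 := by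
    rw [hR.associator_swap_left, associator, hR.mul_eq_zero_of_diag_right h hm ha,
      hR.mul_eq_zero_of_diag_left h ha hn, zero_mul, mul_zero, sub_zero, neg_zero]
  have hb_mn : associator b m n = 0 := by
    rw [associator, hR.mul_eq_zero_of_diag_left h.symm hb hm,
      hR.mul_eq_zero_of_diag_diag he h.symm hb (hR.mul_mem_peirceComponent_diag hm hn), zero_mul,
      sub_zero]
  rw [associator_add_left, ha_mn, hb_mn, add_zero]

theorem associator_diag_off_same (hR : IsAlternative R) (he : IsIdempotentElem e)
    (h : IsWeightPair p q) (hd : d ∈ peirceDiag e) (hm : m ∈ peirceComponent e p q)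
    (hn : n ∈ peirceComponent e p q) : associator d m n = lieBr (m * n) d := by
  obtain ⟨a, ha, b, hb, rfl⟩ := hR.exists_add_eq_of_mem_peirceDiag he h hd
  have hmn := hR.mul_mem_peirceComponent_swap hm hn
  have ha_mn : associator a m n = lieBr (m * n) a := by
    rw [← hR.associator_rotate, associator, lieBr, hR.mul_eq_zero_of_diag_right h hn ha,
      hR.mul_eq_zero_of_diag_left h ha hmn, mul_zero]
  have hb_mn : associator b m n = lieBr (m * n) b := by
    rw [associator, lieBr, hR.mul_eq_zero_of_diag_left h.symm hb hm,
      hR.mul_eq_zero_of_diag_right h.symm hmn hb, zero_mul]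
  rw [associator_add_left, lieBr_add, ha_mn, hb_mn]

theorem associator_off_off_eq_zero_of_commute (hR : IsAlternative R) (he : IsIdempotentElem e)
    (hd : d ∈ peirceDiag e) (hcomm : ∀ m ∈ peirceOff e, m * d = d * m)
    (hm : m ∈ peirceOff e) (hn : n ∈ peirceOff e) : associator d m n = 0 := by
  have same {p q : ℤ} (h : IsWeightPair p q) {m n : R} (hm : m ∈ peirceComponent e p q)
      (hn : n ∈ peirceComponent e p q) : associator d m n = 0 := by
    rw [hR.associator_diag_off_same he h hd hm hn]
    exact sub_eq_zero.2 (hcomm _ (peirceComponent_le_peirceOff e h.symm.add_eq_one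
      (hR.mul_mem_peirceComponent_swap hm hn)))
  obtain ⟨m₁, hm₁, m₂, hm₂, rfl⟩ := hR.exists_add_eq_of_mem_peirceOff he hm
  obtain ⟨n₁, hn₁, n₂, hn₂, rfl⟩ := hR.exists_add_eq_of_mem_peirceOff he hn
  rw [associator_add_right, associator_add_middle, associator_add_middle,
    same isWeightPair_one_zero hm₁ hn₁, same isWeightPair_zero_one hm₂ hn₂,
    hR.associator_diag_off_opposite he isWeightPair_one_zero hd hm₁ hn₂,
    hR.associator_diag_off_opposite he isWeightPair_zero_one hd hm₂ hn₁]
  simp only [add_zero]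

end PeirceAssociators

end IsAlternative

end Peirce

section AdditivityDefect

variable {R : Type*} [NonUnitalNonAssocRing R]

/-- The failure `D (a + b) - D a - D b` of `D` to be additive at the pair `(a, b)`. -/
def additivityDefect (D : R → R) (a b : R) : R := D (a + b) - D a - D b

theorem map_add_eq_add_additivityDefect (D : R → R) (a b : R) :
    D (a + b) = D a + D b + additivityDefect D a b := by
  rw [additivityDefect]; abel

theorem additivityDefect_eq_zero_iff {D : R → R} {a b : R} :
    additivityDefect D a b = 0 ↔ D (a + b) = D a + D b := by
  rw [additivityDefect, sub_sub, sub_eq_zero]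

namespace IsLieTripleDerivable

variable {D : R → R} {e : R} {p q : ℤ} {a b m : R}

theorem map_zero (hD : IsLieTripleDerivable D) : D 0 = 0 := by
  simpa only [lieBr_zero, zero_lieBr, add_zero] using hD 0 0 0

theorem additivityDefect_zero_left (hD : IsLieTripleDerivable D) (a : R) :
    additivityDefect D 0 a = 0 := by
  rw [additivityDefect_eq_zero_iff, hD.map_zero, zero_add, zero_add]

theorem additivityDefect_zero_right (hD : IsLieTripleDerivable D) (a : R) :
    additivityDefect D a 0 = 0 := by
  rw [additivityDefect_eq_zero_iff, hD.map_zero, add_zero, add_zero]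

theorem lieBr_lieBr_additivityDefect_left (hD : IsLieTripleDerivable D) (a b y z : R) :
    lieBr (lieBr (additivityDefect D a b) y) z =
      additivityDefect D (lieBr (lieBr a y) z) (lieBr (lieBr b y) z) := by
  have hadd := hD (a + b) y z
  simp only [add_lieBr] at hadd
  simp only [additivityDefect, hadd, hD a y z, hD b y z, sub_lieBr]
  abel

theorem lieBr_lieBr_additivityDefect_right (hD : IsLieTripleDerivable D) (x y a b : R) :
    lieBr (lieBr x y) (additivityDefect D a b) =
      additivityDefect D (lieBr (lieBr x y) a) (lieBr (lieBr x y) b) := by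
  have hadd := hD x y (a + b)
  simp only [lieBr_add] at hadd
  simp only [additivityDefect, hadd, hD x y a, hD x y b, lieBr_sub]
  abel

theorem map_lieBr_lieBr_add_add (hD : IsLieTripleDerivable D) (x x' y y' z : R) :
    D (lieBr (lieBr (x + x') (y + y')) z) =
      D (lieBr (lieBr x y) z) + D (lieBr (lieBr x y') z) + D (lieBr (lieBr x' y) z) +
        D (lieBr (lieBr x' y') z) + lieBr (lieBr (additivityDefect D x x') (y + y')) z +
        lieBr (lieBr (x + x') (additivityDefect D y y')) z := by
  rw [hD, map_add_eq_add_additivityDefect D x x', map_add_eq_add_additivityDefect D y y',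
    hD x y z, hD x y' z, hD x' y z, hD x' y' z]
  simp only [add_lieBr, lieBr_add]
  abel

theorem lieBr_off_additivityDefect (hD : IsLieTripleDerivable D) (hR : IsAlternative R)
    (he : IsIdempotentElem e) (hm : m ∈ peirceOff e) (a b : R) :
    lieBr m (additivityDefect D a b) = additivityDefect D (lieBr m a) (lieBr m b) := by
  obtain ⟨x, y, rfl⟩ : ∃ x y, lieBr x y = m := ⟨_, _, hR.lieBr_lieBr_of_mem_peirceOff he hm⟩
  exact hD.lieBr_lieBr_additivityDefect_right x y a b

theorem additivityDefect_mem_peirceDiag_of_left (hD : IsLieTripleDerivable D)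
    (hR : IsAlternative R) (he : IsIdempotentElem e) (ha : a ∈ peirceDiag e) (b : R) :
    additivityDefect D a b ∈ peirceDiag e := by
  apply hR.mem_peirceDiag_of_lieBr_lieBr_eq_zero he
  rw [hD.lieBr_lieBr_additivityDefect_left, lieBr_eq_zero_of_mem_peirceDiag ha, zero_lieBr,
    hD.additivityDefect_zero_left]

theorem additivityDefect_mem_peirceDiag_of_right (hD : IsLieTripleDerivable D)
    (hR : IsAlternative R) (he : IsIdempotentElem e) (a : R) (hb : b ∈ peirceDiag e) :
    additivityDefect D a b ∈ peirceDiag e := by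
  apply hR.mem_peirceDiag_of_lieBr_lieBr_eq_zero he
  rw [hD.lieBr_lieBr_additivityDefect_left, lieBr_eq_zero_of_mem_peirceDiag hb, zero_lieBr,
    hD.additivityDefect_zero_right]

theorem map_add_add_lieBr_lieBr (hD : IsLieTripleDerivable D) (hR : IsAlternative R)
    (he : IsIdempotentElem e) (ha : a ∈ peirceOff e) (hb : b ∈ peirceOff e)
    (hba : lieBr b (additivityDefect D e a) = 0) (hab : lieBr a (additivityDefect D e (-b)) = 0) :
    D (a + b + lieBr (lieBr b a) e) = D a + D b + D (lieBr (lieBr b a) e) := by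
  have hediag : e ∈ peirceDiag e := rfl
  have hdiag (c : R) : lieBr (additivityDefect D e c) e = 0 :=
    lieBr_eq_zero_of_mem_peirceDiag (hD.additivityDefect_mem_peirceDiag_of_left hR he hediag c)
  have hdiag' (c : R) : lieBr e (additivityDefect D e c) = 0 := by
    rw [← neg_lieBr_swap, hdiag, neg_zero]
  have hba' : lieBr (additivityDefect D e a) b = 0 := by rw [← neg_lieBr_swap, hba, neg_zero]
  have hea : lieBr (lieBr a e) e = a := hR.lieBr_lieBr_of_mem_peirceOff he ha
  have heb : lieBr (lieBr e (-b)) e = b := by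
    rw [lieBr_neg, neg_lieBr_swap, hR.lieBr_lieBr_of_mem_peirceOff he hb]
  have hexpand := hD.map_lieBr_lieBr_add_add e a e (-b) e
  have harg : lieBr (lieBr (e + a) (e + -b)) e = a + b + lieBr (lieBr b a) e := by
    simp only [add_lieBr, lieBr_add, lieBr_self, zero_lieBr, hea, heb]
    rw [lieBr_neg, neg_lieBr_swap]; abel
  have hcross : lieBr a (-b) = lieBr b a := by rw [lieBr_neg, neg_lieBr_swap]
  rw [harg, hea, heb, hcross, lieBr_self, zero_lieBr, hD.map_zero] at hexpand
  rw [hexpand]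
  simp only [lieBr_add, add_lieBr, lieBr_neg, hdiag, hdiag', hba', hab, neg_zero, zero_lieBr,
    add_zero, zero_add, add_comm (D b)]

theorem map_add_of_lieBr_mem_peirceDiag (hD : IsLieTripleDerivable D) (hR : IsAlternative R)
    (he : IsIdempotentElem e) (ha : a ∈ peirceOff e) (hb : b ∈ peirceOff e)
    (hab : lieBr a b ∈ peirceDiag e) : D (a + b) = D a + D b := by
  have commutes {m c : R} (hm : m ∈ peirceOff e) (hmc : lieBr m c ∈ peirceDiag e) :
      lieBr m (additivityDefect D e c) = 0 := by
    apply hR.eq_zero_of_mem_peirceDiag_of_mem_peirceOff he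
    · rw [hD.lieBr_off_additivityDefect hR he hm]
      exact hD.additivityDefect_mem_peirceDiag_of_right hR he _ hmc
    · exact hR.lieBr_off_diag_mem_peirceOff he hm
        (hD.additivityDefect_mem_peirceDiag_of_left hR he rfl c)
  have hba : lieBr b a ∈ peirceDiag e := by
    rw [← neg_lieBr_swap]; exact neg_mem hab
  have hab' : lieBr a (-b) ∈ peirceDiag e := by
    rw [lieBr_neg]; exact neg_mem hab
  simpa only [lieBr_eq_zero_of_mem_peirceDiag hba, hD.map_zero, add_zero] using
    hD.map_add_add_lieBr_lieBr hR he ha hb (commutes hb hba) (commutes ha hab')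

theorem map_add_of_mem_peirceComponent_opposite (hD : IsLieTripleDerivable D)
    (hR : IsAlternative R) (he : IsIdempotentElem e) (h : IsWeightPair p q)
    (ha : a ∈ peirceComponent e p q) (hb : b ∈ peirceComponent e q p) : D (a + b) = D a + D b :=
  hD.map_add_of_lieBr_mem_peirceDiag hR he (peirceComponent_le_peirceOff e h.add_eq_one ha)
    (peirceComponent_le_peirceOff e h.symm.add_eq_one hb) (hR.lieBr_mem_peirceDiag ha hb)

theorem map_add_of_mem_peirceComponent_same (hD : IsLieTripleDerivable D) (hR : IsAlternative R)
    (he : IsIdempotentElem e) (h : IsWeightPair p q) (ha : a ∈ peirceComponent e p q)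
    (hb : b ∈ peirceComponent e p q) : D (a + b) = D a + D b := by
  have off {x : R} (hx : x ∈ peirceComponent e p q) : x ∈ peirceOff e :=
    peirceComponent_le_peirceOff e h.add_eq_one hx
  have commutes {m c : R} (hm : m ∈ peirceComponent e p q) (hc : c ∈ peirceComponent e p q) :
      lieBr m (additivityDefect D e c) = 0 := by
    rw [hD.lieBr_off_additivityDefect hR he (off hm), additivityDefect_eq_zero_iff]
    exact hD.map_add_of_mem_peirceComponent_opposite hR he h (lieBr_mem_peirceComponent hm)
      (hR.lieBr_mem_peirceComponent_swap hm hc)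
  have hsum := hD.map_add_add_lieBr_lieBr hR he (off ha) (off hb) (commutes hb ha)
    (commutes ha (neg_mem hb))
  have hbr : lieBr (lieBr b a) e ∈ peirceComponent e q p :=
    lieBr_mem_peirceComponent (hR.lieBr_mem_peirceComponent_swap hb ha)
  rw [hD.map_add_of_mem_peirceComponent_opposite hR he h (add_mem ha hb) hbr] at hsum
  exact add_right_cancel hsum

theorem map_add_of_mem_peirceOff (hD : IsLieTripleDerivable D) (hR : IsAlternative R)
    (he : IsIdempotentElem e) (ha : a ∈ peirceOff e) (hb : b ∈ peirceOff e) :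
    D (a + b) = D a + D b := by
  obtain ⟨a₁, ha₁, a₂, ha₂, rfl⟩ := hR.exists_add_eq_of_mem_peirceOff he ha
  obtain ⟨b₁, hb₁, b₂, hb₂, rfl⟩ := hR.exists_add_eq_of_mem_peirceOff he hb
  have h := isWeightPair_one_zero
  have opposite {x y : R} := hD.map_add_of_mem_peirceComponent_opposite (a := x) (b := y) hR he h
  rw [add_add_add_comm, opposite (add_mem ha₁ hb₁) (add_mem ha₂ hb₂), opposite ha₁ ha₂,
    opposite hb₁ hb₂, hD.map_add_of_mem_peirceComponent_same hR he h ha₁ hb₁,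
    hD.map_add_of_mem_peirceComponent_same hR he h.symm ha₂ hb₂, add_add_add_comm]

theorem additivityDefect_mem_peirceDiag (hD : IsLieTripleDerivable D) (hR : IsAlternative R)
    (he : IsIdempotentElem e) (a b : R) : additivityDefect D a b ∈ peirceDiag e := by
  apply hR.mem_peirceDiag_of_lieBr_lieBr_eq_zero he
  rw [hD.lieBr_lieBr_additivityDefect_left, additivityDefect_eq_zero_iff]
  exact hD.map_add_of_mem_peirceOff hR he (hR.lieBr_lieBr_mem_peirceOff he a)
    (hR.lieBr_lieBr_mem_peirceOff he b)

theorem lieBr_off_additivityDefect_eq_zero (hD : IsLieTripleDerivable D) (hR : IsAlternative R)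
    (he : IsIdempotentElem e) (hm : m ∈ peirceOff e) (a b : R) :
    lieBr m (additivityDefect D a b) = 0 := by
  apply hR.eq_zero_of_mem_peirceDiag_of_mem_peirceOff he
  · rw [hD.lieBr_off_additivityDefect hR he hm]
    exact hD.additivityDefect_mem_peirceDiag hR he _ _
  · exact hR.lieBr_off_diag_mem_peirceOff he hm (hD.additivityDefect_mem_peirceDiag hR he a b)

end IsLieTripleDerivable

end AdditivityDefect

section Annihilator

variable {R : Type*} [NonUnitalNonAssocRing R]

/-- The two-sided annihilator of a subset `S`: all `x` with `s * x = 0 = x * s` for `s ∈ S`. -/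
def twoSidedAnnihilator (S : Set R) : AddSubgroup R where
  carrier := {x | ∀ s ∈ S, s * x = 0 ∧ x * s = 0}
  zero_mem' := by simp
  add_mem' := by
    intro x y hx hy s hs
    simp only [mul_add, add_mul, hx s hs, hy s hs, add_zero, and_self]
  neg_mem' := by
    intro x hx s hs
    simp only [mul_neg, neg_mul, hx s hs, neg_zero, and_self]

theorem subset_twoSidedAnnihilator_comm {S T : Set R} (h : S ⊆ twoSidedAnnihilator T) :
    T ⊆ twoSidedAnnihilator S :=
  fun _ ht _ hs => (h hs _ ht).symm

theorem isTwoSidedIdealSet_of_mul_mem {I : AddSubgroup R}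
    (hI : ∀ r, ∀ a ∈ I, r * a ∈ I ∧ a * r ∈ I) : IsTwoSidedIdealSet (I : Set R) :=
  ⟨I.zero_mem, fun _ _ => I.add_mem, fun _ => I.neg_mem, hI⟩

theorem IsAlternative.isTwoSidedIdealSet_twoSidedAnnihilator (hR : IsAlternative R) {I : Set R}
    (hI : IsTwoSidedIdealSet I) : IsTwoSidedIdealSet (twoSidedAnnihilator I : Set R) := by
  refine isTwoSidedIdealSet_of_mul_mem fun r x hx => ?_
  have ideal {c : R} (hc : c ∈ I) : r * c ∈ I ∧ c * r ∈ I := hI.2.2.2 r c hc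
  have hxcr {c : R} (hc : c ∈ I) : associator x c r = 0 := by
    rw [associator, (hx c hc).2, (hx _ (ideal hc).2).2, zero_mul, sub_zero]
  have hrcx {c : R} (hc : c ∈ I) : associator r c x = 0 := by
    rw [associator, (hx c hc).1, (hx _ (ideal hc).1).1, mul_zero, sub_zero]
  refine ⟨fun c hc => ⟨?_, ?_⟩, fun c hc => ⟨?_, ?_⟩⟩
  · rw [← sub_eq_zero.1 ((hR.associator_rotate x c r).trans (hxcr hc)), (hx _ (ideal hc).2).1]
  · rw [sub_eq_zero.1 ((hR.associator_swap_right r c x).trans (by rw [hrcx hc, neg_zero])),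
      (hx c hc).2, mul_zero]
  · rw [← sub_eq_zero.1 ((hR.associator_swap_left x c r).trans (by rw [hxcr hc, neg_zero])),
      (hx c hc).1, zero_mul]
  · rw [sub_eq_zero.1 ((hR.associator_rotate x r c).symm.trans (hrcx hc)), (hx _ (ideal hc).1).2]

theorem IsPrimeRing.eq_zero_of_mem_twoSidedAnnihilator (hprime : IsPrimeRing R)
    (hR : IsAlternative R) {I : Set R} {a x : R} (hI : IsTwoSidedIdealSet I) (ha : a ∈ I)
    (ha0 : a ≠ 0) (hx : x ∈ twoSidedAnnihilator I) : x = 0 := by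
  by_contra hx0
  obtain ⟨b, hb, y, hy, hby⟩ := hprime I (twoSidedAnnihilator I) hI
    (hR.isTwoSidedIdealSet_twoSidedAnnihilator hI) (fun h => ha0 (by rwa [h] at ha))
    (fun h => hx0 (h.subset hx))
  exact hby (hy b hb).1

end Annihilator

section PrimeAlternative

variable {R : Type*} [NonUnitalNonAssocRing R] {e c d d' m : R}

namespace IsAlternative

theorem associator_off_diag_diag (hR : IsAlternative R) (he : IsIdempotentElem e)
    (hm : m ∈ peirceOff e) (hc : c ∈ peirceDiag e) (hd : d ∈ peirceDiag e) :
    associator m c d = 0 := by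
  rw [← hR.associator_rotate, hR.associator_diag_diag_off he hc hd hm]

theorem associator_diag_off_diag (hR : IsAlternative R) (he : IsIdempotentElem e)
    (hc : c ∈ peirceDiag e) (hm : m ∈ peirceOff e) (hd : d ∈ peirceDiag e) :
    associator c m d = 0 := by
  rw [hR.associator_swap_right, hR.associator_diag_diag_off he hc hd hm, neg_zero]

theorem isTwoSidedIdealSet_peirceComponent_one_one (hR : IsAlternative R)
    (he : IsIdempotentElem e) (hdiag : ∀ x, x ∈ peirceDiag e) :
    IsTwoSidedIdealSet (peirceComponent e 1 1 : Set R) := by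
  refine isTwoSidedIdealSet_of_mul_mem fun r x hx => ?_
  have h := isWeightPair_one_zero
  obtain ⟨a, ha, b, hb, rfl⟩ := hR.exists_add_eq_of_mem_peirceDiag he h (hdiag r)
  rw [add_mul, mul_add, hR.mul_eq_zero_of_diag_diag he h.symm hb hx,
    hR.mul_eq_zero_of_diag_diag he h hx hb, add_zero, add_zero]
  exact ⟨hR.mul_mem_peirceComponent ha hx, hR.mul_mem_peirceComponent hx ha⟩

theorem isTwoSidedIdealSet_peirceDiag_inf_twoSidedAnnihilator (hR : IsAlternative R)
    (he : IsIdempotentElem e) :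
    IsTwoSidedIdealSet
      ((peirceDiag e ⊓ twoSidedAnnihilator (peirceOff e) : AddSubgroup R) : Set R) := by
  refine isTwoSidedIdealSet_of_mul_mem ?_
  rintro r x ⟨hx, hxoff⟩
  obtain ⟨d, hd, n, hn, rfl⟩ := hR.exists_diag_add_off_eq he r
  rw [add_mul, mul_add, (hxoff n hn).1, (hxoff n hn).2, add_zero, add_zero]
  refine ⟨⟨hR.mul_mem_peirceDiag he hd hx, fun m hm => ⟨?_, ?_⟩⟩,
    hR.mul_mem_peirceDiag he hx hd, fun m hm => ⟨?_, ?_⟩⟩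
  · rw [← sub_eq_zero.1 (hR.associator_off_diag_diag he hm hd hx),
      (hxoff _ (hR.mul_diag_mem_peirceOff he hd hm)).1]
  · rw [sub_eq_zero.1 (hR.associator_diag_diag_off he hd hx hm), (hxoff m hm).2, mul_zero]
  · rw [← sub_eq_zero.1 (hR.associator_off_diag_diag he hm hx hd), (hxoff m hm).1, zero_mul]
  · rw [sub_eq_zero.1 (hR.associator_diag_diag_off he hx hd hm),
      (hxoff _ (hR.diag_mul_mem_peirceOff he hd hm)).2]

end IsAlternative

namespace IsPrimeRing

theorem exists_mem_peirceOff_ne_zero (hprime : IsPrimeRing R) (hR : IsAlternative R)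
    (he : IsNontrivialIdempotent e) : ∃ m ∈ peirceOff e, m ≠ 0 := by
  by_contra! hoff
  obtain ⟨hidem, hne, hnotone⟩ := he
  have hdiag (x : R) : x ∈ peirceDiag e :=
    hR.mem_peirceDiag_of_lieBr_lieBr_eq_zero hidem
      (hoff _ (hR.lieBr_lieBr_mem_peirceOff hidem x))
  have he11 : e ∈ peirceComponent e 1 1 := by
    constructor <;> rw [one_smul, hidem]
  refine hnotone fun x => ?_
  have h := isWeightPair_one_zero
  obtain ⟨a, ha, b, hb, rfl⟩ := hR.exists_add_eq_of_mem_peirceDiag hidem h (hdiag x)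
  have hb0 : b = 0 := hprime.eq_zero_of_mem_twoSidedAnnihilator hR
    (hR.isTwoSidedIdealSet_peirceComponent_one_one hidem hdiag) he11 hne fun _ hs =>
      ⟨hR.mul_eq_zero_of_diag_diag hidem h hs hb, hR.mul_eq_zero_of_diag_diag hidem h.symm hb hs⟩
  simpa only [hb0, add_zero, one_smul] using And.intro ha.1 ha.2

theorem eq_zero_of_mem_peirceDiag_of_mem_twoSidedAnnihilator (hprime : IsPrimeRing R)
    (hR : IsAlternative R) (he : IsNontrivialIdempotent e) (hd : d ∈ peirceDiag e)
    (hoff : d ∈ twoSidedAnnihilator (peirceOff e : Set R)) : d = 0 := by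
  obtain ⟨m, hm, hm0⟩ := hprime.exists_mem_peirceOff_ne_zero hR he
  have hK := hR.isTwoSidedIdealSet_peirceDiag_inf_twoSidedAnnihilator he.1
  exact hprime.eq_zero_of_mem_twoSidedAnnihilator hR
    (hR.isTwoSidedIdealSet_twoSidedAnnihilator hK)
    (subset_twoSidedAnnihilator_comm (fun _ hx => hx.2) hm) hm0
    (subset_twoSidedAnnihilator_comm subset_rfl ⟨hd, hoff⟩)

theorem associator_diag_diag_diag (hprime : IsPrimeRing R) (hR : IsAlternative R)
    (he : IsNontrivialIdempotent e) (hc : c ∈ peirceDiag e) (hd : d ∈ peirceDiag e)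
    (hd' : d' ∈ peirceDiag e) : associator c d d' = 0 := by
  have mul_mem {x y : R} := hR.mul_mem_peirceDiag (c := x) (d := y) he.1
  have diag_diag_off {x y m : R} := hR.associator_diag_diag_off (c := x) (d := y) (m := m) he.1
  have off_diag_diag {x y m : R} := hR.associator_off_diag_diag (c := x) (d := y) (m := m) he.1
  apply hprime.eq_zero_of_mem_peirceDiag_of_mem_twoSidedAnnihilator hR he
  · exact sub_mem (mul_mem (mul_mem hc hd) hd') (mul_mem hc (mul_mem hd hd'))
  · refine fun m hm => ⟨?_, ?_⟩
    · simpa only [off_diag_diag hm hc hd, off_diag_diag hm (mul_mem hc hd) hd',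
        off_diag_diag hm hc (mul_mem hd hd'),
        off_diag_diag (hR.mul_diag_mem_peirceOff he.1 hc hm) hd hd', zero_mul, sub_zero, add_zero]
        using associator_cocycle m c d d'
    · simpa only [diag_diag_off hd hd' hm, diag_diag_off (mul_mem hc hd) hd' hm,
        diag_diag_off hc (mul_mem hd hd') hm,
        diag_diag_off hc hd (hR.diag_mul_mem_peirceOff he.1 hd' hm), mul_zero, sub_zero, add_zero,
        zero_add] using associator_cocycle c d d' m

theorem diag_mul_comm_of_commute_off (hprime : IsPrimeRing R) (hR : IsAlternative R)
    (he : IsNontrivialIdempotent e) (hd : d ∈ peirceDiag e)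
    (hcomm : ∀ m ∈ peirceOff e, m * d = d * m) (hc : c ∈ peirceDiag e) : d * c = c * d := by
  rw [← sub_eq_zero]
  apply hprime.eq_zero_of_mem_peirceDiag_of_mem_twoSidedAnnihilator hR he
  · exact sub_mem (hR.mul_mem_peirceDiag he.1 hd hc) (hR.mul_mem_peirceDiag he.1 hc hd)
  refine fun m hm => ⟨?_, ?_⟩
  · rw [mul_sub, sub_eq_zero]
    calc m * (d * c) = m * d * c := (sub_eq_zero.1 (hR.associator_off_diag_diag he.1 hm hd hc)).symm
      _ = d * m * c := by rw [hcomm m hm]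
      _ = d * (m * c) := sub_eq_zero.1 (hR.associator_diag_off_diag he.1 hd hm hc)
      _ = m * c * d := (hcomm _ (hR.mul_diag_mem_peirceOff he.1 hc hm)).symm
      _ = m * (c * d) := sub_eq_zero.1 (hR.associator_off_diag_diag he.1 hm hc hd)
  · rw [sub_mul, sub_eq_zero]
    calc d * c * m = d * (c * m) := sub_eq_zero.1 (hR.associator_diag_diag_off he.1 hd hc hm)
      _ = c * m * d := (hcomm _ (hR.diag_mul_mem_peirceOff he.1 hc hm)).symm
      _ = c * (m * d) := sub_eq_zero.1 (hR.associator_diag_off_diag he.1 hc hm hd)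
      _ = c * (d * m) := by rw [hcomm m hm]
      _ = c * d * m := (sub_eq_zero.1 (hR.associator_diag_diag_off he.1 hc hd hm)).symm

theorem associator_eq_zero_of_commute_off (hprime : IsPrimeRing R) (hR : IsAlternative R)
    (he : IsNontrivialIdempotent e) (hd : d ∈ peirceDiag e)
    (hcomm : ∀ m ∈ peirceOff e, m * d = d * m) (x y : R) : associator d x y = 0 := by
  obtain ⟨a, ha, m, hm, rfl⟩ := hR.exists_diag_add_off_eq he.1 x
  obtain ⟨b, hb, n, hn, rfl⟩ := hR.exists_diag_add_off_eq he.1 y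
  rw [associator_add_right, associator_add_middle, associator_add_middle,
    hprime.associator_diag_diag_diag hR he hd ha hb, hR.associator_diag_off_diag he.1 hd hm hb,
    hR.associator_diag_diag_off he.1 hd ha hn,
    hR.associator_off_off_eq_zero_of_commute he.1 hd hcomm hm hn]
  simp only [add_zero]

theorem mem_ringCenter_of_commute_off (hprime : IsPrimeRing R) (hR : IsAlternative R)
    (he : IsNontrivialIdempotent e) (hd : d ∈ peirceDiag e)
    (hcomm : ∀ m ∈ peirceOff e, m * d = d * m) : d ∈ ringCenter R := by
  have hassoc := hprime.associator_eq_zero_of_commute_off hR he hd hcomm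
  refine ⟨fun x y => sub_eq_zero.1 (hassoc x y), fun x y => sub_eq_zero.1 ?_,
    fun x y => sub_eq_zero.1 ?_, fun x => ?_⟩
  · exact (hR.associator_swap_left d x y).trans (by rw [hassoc, neg_zero])
  · exact (hR.associator_rotate d x y).trans (hassoc x y)
  · obtain ⟨c, hc, m, hm, rfl⟩ := hR.exists_diag_add_off_eq he.1 x
    rw [mul_add, add_mul, hprime.diag_mul_comm_of_commute_off hR he hd hcomm hc, hcomm m hm]

end IsPrimeRing

end PrimeAlternative

theorem prime_lieTripleDer_almost_additive_general {R : Type*} [NonUnitalNonAssocRing R]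
    (hR : IsAlternative R) (hprime : IsPrimeRing R) (e : R) (he : IsNontrivialIdempotent e)
    (D : R → R) (hD : IsLieTripleDerivable D) (a b : R) :
    ∃ z ∈ ringCenter R, D (a + b) = D a + D b + z := by
  refine ⟨additivityDefect D a b, ?_, map_add_eq_add_additivityDefect D a b⟩
  exact hprime.mem_ringCenter_of_commute_off hR he (hD.additivityDefect_mem_peirceDiag hR he.1 a b)
    fun m hm => sub_eq_zero.1 (hD.lieBr_off_additivityDefect_eq_zero hR he.1 hm a b)

theorem prime_lieTripleDer_almost_additive
    {R : Type*} [NonUnitalNonAssocRing R]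
    (hR : IsAlternative R) (htf : ThreeTorsionFree R) (hprime : IsPrimeRing R)
    (e : R) (he : IsNontrivialIdempotent e)
    (D : R → R) (hD : IsLieTripleDerivable D) :
    ∀ a b : R, ∃ z ∈ ringCenter R, D (a + b) = D a + D b + z :=
  prime_lieTripleDer_almost_additive_general hR hprime e he D hD
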